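/- arXiv:2309.05546 — 2 statements merged into one kernel-verified Lean document; each statement's English description precedes it below -/
import Mathlib

section
/- Let U : ℝ^d → ℝ be smooth and let c be a critical point of U whose Hessian ∇²U(c) is invertible and has at least two negative eigenvalues (counted with multiplicity). Then for all sufficiently small r > 0 the set A(c,r) is path-connected. -/
/-!
Write `N` for the span of the Hessian eigenvectors with negative eigenvalue, so that `Nᗮ` is
spanned by those with positive eigenvalue.  By continuity of the second derivative there is a ball
around `c` in which `D²U(x)` is negative definite on `N` and positive definite on `Nᗮ`.

Inside this ball, `U < U c` on the punctured slice `c + (N ∖ {0})`, since `U` is strictly concave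
along lines from `c` in `N` and `c` is critical; likewise `U > U c` on `c + (Nᗮ ∖ {0})`.  Now let
`y = c + n + p` lie in the sublevel set, with `n ∈ N` and `p ∈ Nᗮ`.  Then `n ≠ 0`, and
`s ↦ U (c + n + s p)` is convex on `[0, 1]` with both end values below `U c`, so the whole segment
from `c + n` to `y` stays in the sublevel set; it stays in the Euclidean ball because `n ⟂ p`.
Hence every point of the set is joined to the punctured ball of `c + N`, which is path-connected
because `dim N ≥ 2`.  No Morse chart is needed, which is what makes round balls tractable.

The argument is `isPathConnected_sublevel_of_definite_splitting`; the Hessian matrix enters only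
through `second_deriv_eq_sum_eigenvalues`, which yields the definiteness on `N` and `Nᗮ`.
-/

/-- The Hessian matrix `∇²U(x)` of `U : ℝ^d → ℝ` at `x`, whose `(i, j)` entry is the second
derivative of `U` at `x` in the directions of the `i`-th and `j`-th coordinate vectors. -/
noncomputable def hessianMatrix {d : ℕ} (U : EuclideanSpace ℝ (Fin d) → ℝ)
    (x : EuclideanSpace ℝ (Fin d)) : Matrix (Fin d) (Fin d) ℝ :=
  fun i j =>
    iteratedFDeriv ℝ 2 U x ![EuclideanSpace.single i (1 : ℝ), EuclideanSpace.single j (1 : ℝ)]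

/-! ### Functions restricted to lines, and punctured balls -/

section Calculus

variable {E : Type*} [NormedAddCommGroup E] [NormedSpace ℝ E]

theorem hasDerivAt_comp_line {F : Type*} [NormedAddCommGroup F] [NormedSpace ℝ F] {f : E → F}
    (hf : Differentiable ℝ f) (x v : E) (s : ℝ) :
    HasDerivAt (fun s : ℝ => f (x + s • v)) (fderiv ℝ f (x + s • v) v) s := by
  have h1 : HasDerivAt (fun s : ℝ => x + s • v) v s := by
    simpa using ((hasDerivAt_id s).smul_const v).const_add x
  exact (hf _).hasFDerivAt.comp_hasDerivAt s h1

theorem hasDerivAt_fderiv_comp_line {f : E → ℝ} (hf : ContDiff ℝ 2 f) (x v : E) (s : ℝ) :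
    HasDerivAt (fun s : ℝ => fderiv ℝ f (x + s • v) v)
      (fderiv ℝ (fderiv ℝ f) (x + s • v) v v) s := by
  have hd : Differentiable ℝ (fderiv ℝ f) :=
    (hf.fderiv_right (m := 1) (by norm_num)).differentiable (by norm_num)
  exact (ContinuousLinearMap.apply ℝ ℝ v).hasFDerivAt.comp_hasDerivAt s
    (hasDerivAt_comp_line hd x v s)

theorem convexOn_comp_line {f : E → ℝ} (hf : ContDiff ℝ 2 f) (x v : E)
    (h : ∀ s ∈ Set.Icc (0 : ℝ) 1, 0 < fderiv ℝ (fderiv ℝ f) (x + s • v) v v) :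
    ConvexOn ℝ (Set.Icc (0 : ℝ) 1) (fun s : ℝ => f (x + s • v)) := by
  have hd : Differentiable ℝ f := hf.differentiable (by norm_num)
  refine convexOn_of_hasDerivWithinAt2_nonneg (convex_Icc 0 1)
    (fun s _ => (hasDerivAt_comp_line hd x v s).continuousAt.continuousWithinAt)
    (fun s _ => (hasDerivAt_comp_line hd x v s).hasDerivWithinAt)
    (fun s _ => (hasDerivAt_fderiv_comp_line hf x v s).hasDerivWithinAt)
    (fun s hs => (h s (interior_subset hs)).le)

/-- If `f` is stationary at `x` in the direction `v` and strictly convex along the segment from `x`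
to `x + v`, then it is larger at `x + v` than at `x`. -/
theorem lt_of_second_deriv_pos {f : E → ℝ} (hf : ContDiff ℝ 2 f) (x v : E)
    (h0 : fderiv ℝ f x v = 0)
    (h : ∀ s ∈ Set.Icc (0 : ℝ) 1, 0 < fderiv ℝ (fderiv ℝ f) (x + s • v) v v) :
    f x < f (x + v) := by
  have hd : Differentiable ℝ f := hf.differentiable (by norm_num)
  have hmono : StrictMonoOn (fun s : ℝ => fderiv ℝ f (x + s • v) v) (Set.Icc 0 1) := by
    refine strictMonoOn_of_deriv_pos (convex_Icc 0 1)
      (fun s _ => (hasDerivAt_fderiv_comp_line hf x v s).continuousAt.continuousWithinAt) ?_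
    intro s hs
    rw [(hasDerivAt_fderiv_comp_line hf x v s).deriv]
    exact h s (interior_subset hs)
  have hmono2 : StrictMonoOn (fun s : ℝ => f (x + s • v)) (Set.Icc 0 1) := by
    refine strictMonoOn_of_deriv_pos (convex_Icc 0 1)
      (fun s _ => (hasDerivAt_comp_line hd x v s).continuousAt.continuousWithinAt) ?_
    intro s hs
    rw [(hasDerivAt_comp_line hd x v s).deriv]
    rw [interior_Icc] at hs
    have := hmono (by simp) (Set.Ioo_subset_Icc_self hs) hs.1
    simpa [h0] using this
  simpa using hmono2 (a := 0) (b := 1) (by simp) (by simp) one_pos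

/-- The punctured ball is the image of `E ∖ {0}` under the radial map `n ↦ (r / (1 + ‖n‖)) • n`. -/
theorem isPathConnected_punctured_ball (h : 1 < Module.rank ℝ E) {r : ℝ} (hr : 0 < r) :
    IsPathConnected (Metric.ball (0 : E) r \ {0}) := by
  have hcont : Continuous (fun n : E => (r / (1 + ‖n‖)) • n) := by
    refine Continuous.smul (continuous_const.div (by fun_prop) fun n => ?_) continuous_id
    positivity
  have himg : (fun n : E => (r / (1 + ‖n‖)) • n) '' {0}ᶜ = Metric.ball (0 : E) r \ {0} := by
    ext w
    constructor
    · rintro ⟨n, hn, rfl⟩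
      have hn0 : n ≠ 0 := hn
      have hpos : 0 < r / (1 + ‖n‖) := by positivity
      refine ⟨?_, ?_⟩
      · rw [mem_ball_zero_iff, norm_smul, Real.norm_of_nonneg hpos.le, div_mul_eq_mul_div,
          div_lt_iff₀ (by positivity)]
        linarith
      · exact smul_ne_zero hpos.ne' hn0
    · rintro ⟨hw, hw0⟩
      rw [mem_ball_zero_iff] at hw
      have hpos : 0 < r - ‖w‖ := by linarith
      refine ⟨(r - ‖w‖)⁻¹ • w, smul_ne_zero (inv_pos.2 hpos).ne' hw0, ?_⟩
      simp only [norm_smul, norm_inv, Real.norm_of_nonneg hpos.le, smul_smul]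
      have : r / (1 + (r - ‖w‖)⁻¹ * ‖w‖) * (r - ‖w‖)⁻¹ = 1 := by
        have : 1 + (r - ‖w‖)⁻¹ * ‖w‖ = r / (r - ‖w‖) := by field_simp; ring
        rw [this]
        field_simp
      rw [this, one_smul]
  rw [← himg]
  exact (isPathConnected_compl_singleton_of_one_lt_rank h 0).image hcont

/-- By continuity of the second derivative, the quadratic forms `D²f(x)` and `D²f(c)` differ by
less than `m ‖v‖²` for all `x` in a ball around `c` that does not depend on `v`. -/
theorem exists_ball_second_deriv_close {f : E → ℝ} (hf : ContDiff ℝ 2 f) (c : E) {m : ℝ}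
    (hm : 0 < m) : ∃ r₀ > (0 : ℝ), ∀ x ∈ Metric.ball c r₀, ∀ v : E, v ≠ 0 →
      |fderiv ℝ (fderiv ℝ f) x v v - fderiv ℝ (fderiv ℝ f) c v v| < m * ‖v‖ ^ 2 := by
  have hc : Continuous (fderiv ℝ (fderiv ℝ f)) :=
    (hf.fderiv_right (m := 1) (by norm_num)).continuous_fderiv (by norm_num)
  obtain ⟨r₀, h0, h⟩ := Metric.continuousAt_iff (f := fderiv ℝ (fderiv ℝ f)) (a := c)
    |>.1 hc.continuousAt m hm
  refine ⟨r₀, h0, fun x hx v hv => ?_⟩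
  have h1 : ‖fderiv ℝ (fderiv ℝ f) x - fderiv ℝ (fderiv ℝ f) c‖ < m :=
    (dist_eq_norm (fderiv ℝ (fderiv ℝ f) x) (fderiv ℝ (fderiv ℝ f) c)).symm.trans_lt (h hx)
  have h2 := (fderiv ℝ (fderiv ℝ f) x - fderiv ℝ (fderiv ℝ f) c).le_opNorm₂ v v
  simp only [sub_apply, Real.norm_eq_abs] at h2
  have hv' : 0 < ‖v‖ := norm_pos_iff.2 hv
  have : ‖fderiv ℝ (fderiv ℝ f) x - fderiv ℝ (fderiv ℝ f) c‖ * (‖v‖ * ‖v‖) < m * (‖v‖ * ‖v‖) := by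
    gcongr
  nlinarith

end Calculus

/-! ### Contracting the sublevel set onto the negative subspace -/

/-- The theorem in coordinate-free form: the second derivative at the critical point `c` is
definite, with opposite signs, on a subspace `N` of dimension at least two and on `Nᗮ`. -/
theorem isPathConnected_sublevel_of_definite_splitting {E : Type*} [NormedAddCommGroup E]
    [InnerProductSpace ℝ E] [FiniteDimensional ℝ E] {f : E → ℝ} (hf : ContDiff ℝ 2 f) (c : E)
    (hcrit : fderiv ℝ f c = 0) (N : Submodule ℝ E) (hrank : 1 < Module.rank ℝ N)
    {m : ℝ} (hm : 0 < m)
    (hN : ∀ v ∈ N, fderiv ℝ (fderiv ℝ f) c v v ≤ -(m * ‖v‖ ^ 2))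
    (hP : ∀ v ∈ Nᗮ, m * ‖v‖ ^ 2 ≤ fderiv ℝ (fderiv ℝ f) c v v) :
    ∃ r₀ > (0 : ℝ), ∀ r : ℝ, 0 < r → r ≤ r₀ →
      IsPathConnected ((Metric.ball c r \ {c}) ∩ {y | f y < f c}) := by
  obtain ⟨r₀, hr₀, hclose⟩ := exists_ball_second_deriv_close hf c hm
  refine ⟨r₀, hr₀, fun r hr hrr => ?_⟩
  have hNeg : ∀ x ∈ Metric.ball c r, ∀ v ∈ N, v ≠ 0 → fderiv ℝ (fderiv ℝ f) x v v < 0 := by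
    intro x hx v hv hv0
    have := (abs_lt.1 (hclose x (Metric.ball_subset_ball hrr hx) v hv0)).2
    linarith [hN v hv]
  have hPos : ∀ x ∈ Metric.ball c r, ∀ v ∈ Nᗮ, v ≠ 0 → 0 < fderiv ℝ (fderiv ℝ f) x v v := by
    intro x hx v hv hv0
    have := (abs_lt.1 (hclose x (Metric.ball_subset_ball hrr hx) v hv0)).1
    linarith [hP v hv]
  have hray : ∀ v : E, ‖v‖ < r → ∀ s ∈ Set.Icc (0 : ℝ) 1, c + s • v ∈ Metric.ball c r := by
    intro v hv s hs
    rw [mem_ball_iff_norm, add_sub_cancel_left, norm_smul, Real.norm_of_nonneg hs.1]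
    nlinarith [norm_nonneg v, hs.2]
  have hfN : ∀ v ∈ N, v ≠ 0 → ‖v‖ < r → f (c + v) < f c := by
    intro v hv hv0 hvr
    have h1 : fderiv ℝ (fun x => -f x) = fun x => -fderiv ℝ f x := by
      ext x; simp [fderiv_fun_neg]
    have h := lt_of_second_deriv_pos (f := fun x => -f x) hf.neg c v (by simp [hcrit]) (by
      intro s hs
      rw [h1, fderiv_fun_neg]
      simpa using hNeg _ (hray v hvr s hs) v hv hv0)
    exact neg_lt_neg_iff.1 h
  have hfP : ∀ v ∈ Nᗮ, v ≠ 0 → ‖v‖ < r → f c < f (c + v) := fun v hv hv0 hvr =>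
    lt_of_second_deriv_pos hf c v (by simp [hcrit])
      fun s hs => hPos _ (hray v hvr s hs) v hv hv0
  set A := (Metric.ball c r \ {c}) ∩ {y | f y < f c} with hA
  -- The punctured slice of the ball by `c + N`, onto which the whole set is contracted.
  set S := (fun n : N => c + (n : E)) '' (Metric.ball (0 : N) r \ {0}) with hS
  have hSpc : IsPathConnected S := (isPathConnected_punctured_ball hrank hr).image (by fun_prop)
  have hSA : S ⊆ A := by
    rintro _ ⟨n, ⟨hn, hn0⟩, rfl⟩
    have hn' : ‖(n : E)‖ < r := by simpa using hn
    have hn0' : (n : E) ≠ 0 := by simpa using hn0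
    exact ⟨⟨by simpa using hn', by simpa using hn0'⟩, hfN n n.2 hn0' hn'⟩
  have hjoin : ∀ y ∈ A, ∃ z ∈ S, JoinedIn A z y := by
    intro y hy
    obtain ⟨n, hn, p, hp, hnp⟩ := N.exists_add_mem_mem_orthogonal (y - c)
    have hyeq : y = c + n + p := by rw [add_assoc, ← hnp]; abel
    have hpyth : ∀ s : ℝ, ‖n + s • p‖ ^ 2 = ‖n‖ ^ 2 + s ^ 2 * ‖p‖ ^ 2 := by
      intro s
      have h := norm_add_sq_eq_norm_sq_add_norm_sq_of_inner_eq_zero (𝕜 := ℝ) n (s • p)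
        (Submodule.inner_right_of_mem_orthogonal hn (Nᗮ.smul_mem s hp))
      rw [norm_smul] at h
      have hs : ‖s‖ * ‖s‖ = s ^ 2 := by rw [Real.norm_eq_abs, abs_mul_abs_self, sq]
      linear_combination h + ‖p‖ ^ 2 * hs
    have hyr : ‖n + p‖ < r := by
      rw [← hnp]; exact mem_ball_iff_norm.1 hy.1.1
    have hsr : ∀ s ∈ Set.Icc (0 : ℝ) 1, ‖n + s • p‖ < r := by
      intro s hs
      have h1 := hpyth 1
      rw [one_smul] at h1
      have hs2 : s ^ 2 ≤ 1 := pow_le_one₀ hs.1 hs.2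
      refine lt_of_le_of_lt ((sq_le_sq₀ (norm_nonneg _) (norm_nonneg _)).1 ?_) hyr
      rw [hpyth s, h1]
      nlinarith [sq_nonneg ‖p‖]
    have hn0 : n ≠ 0 := by
      rintro rfl
      have hp0 : p ≠ 0 := by
        rintro rfl
        exact hy.1.2 (by simp [hyeq])
      have h1 := hfP p hp hp0 (by simpa using hyr)
      have h2 : f y < f c := hy.2
      rw [hyeq, add_zero] at h2
      exact lt_asymm h1 h2
    have hnr : ‖n‖ < r := by simpa using hsr 0 (by simp)
    have hzS : c + n ∈ S := ⟨⟨n, hn⟩, ⟨by simpa using hnr, by simpa using hn0⟩, rfl⟩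
    refine ⟨c + n, hzS, ?_⟩
    by_cases hp0 : p = 0
    · have : y = c + n := by rw [hyeq, hp0, add_zero]
      rw [this]
      exact JoinedIn.refl (hSA hzS)
    have hball : ∀ s ∈ Set.Icc (0 : ℝ) 1, c + n + s • p ∈ Metric.ball c r := by
      intro s hs
      rw [mem_ball_iff_norm, add_assoc, add_sub_cancel_left]
      exact hsr s hs
    have hconv := convexOn_comp_line hf (c + n) p
      fun s hs => hPos _ (hball s hs) p hp hp0
    apply JoinedIn.of_segment_subset
    rw [segment_eq_image']
    rintro _ ⟨s, hs, rfl⟩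
    have hsub : y - (c + n) = p := by rw [hyeq]; abel
    simp only [hsub]
    have hlt : f (c + n + s • p) < f c := by
      have h := hconv.le_max_of_mem_Icc (x := 0) (y := 1) (z := s) (by simp) (by simp) hs
      refine lt_of_le_of_lt h (max_lt ?_ ?_)
      · simpa using hfN n hn hn0 hnr
      · simpa [← hyeq] using hy.2
    refine ⟨⟨hball s hs, ?_⟩, hlt⟩
    intro h
    rw [Set.mem_singleton_iff.1 h] at hlt
    exact lt_irrefl _ hlt
  obtain ⟨z, hz, hzS⟩ := hSpc
  refine ⟨z, hSA hz, fun {y} hy => ?_⟩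
  obtain ⟨w, hw, hwy⟩ := hjoin y hy
  exact ((hzS hw).mono hSA).trans hwy

/-! ### The second derivative in an eigenbasis of the Hessian matrix -/

theorem hessianMatrix_apply {d : ℕ} (U : EuclideanSpace ℝ (Fin d) → ℝ)
    (x : EuclideanSpace ℝ (Fin d)) (i j : Fin d) :
    hessianMatrix U x i j = fderiv ℝ (fderiv ℝ U) x (EuclideanSpace.single i 1)
      (EuclideanSpace.single j 1) := by
  simp [hessianMatrix, iteratedFDeriv_two_apply]

theorem second_deriv_eq_inner_hessian {d : ℕ} (U : EuclideanSpace ℝ (Fin d) → ℝ)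
    (x v w : EuclideanSpace ℝ (Fin d)) :
    fderiv ℝ (fderiv ℝ U) x v w = ∑ i, v i * (hessianMatrix U x).mulVec w i := by
  have hexp : ∀ u : EuclideanSpace ℝ (Fin d), u = ∑ i, u i • EuclideanSpace.single i (1 : ℝ) := by
    intro u
    simpa using ((EuclideanSpace.basisFun (Fin d) ℝ).sum_repr u).symm
  conv_lhs => rw [hexp v, hexp w]
  simp only [map_sum, map_smul, sum_apply, smul_apply,
    smul_eq_mul, Matrix.mulVec, dotProduct, hessianMatrix_apply, Finset.mul_sum]
  rw [Finset.sum_comm]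
  refine Finset.sum_congr rfl fun i _ => Finset.sum_congr rfl fun j _ => ?_
  ring

/-- The second derivative as a quadratic form is diagonal in an eigenbasis of the Hessian. -/
theorem second_deriv_eq_sum_eigenvalues {d : ℕ} (U : EuclideanSpace ℝ (Fin d) → ℝ)
    (c : EuclideanSpace ℝ (Fin d)) (hherm : (hessianMatrix U c).IsHermitian)
    (v : EuclideanSpace ℝ (Fin d)) :
    fderiv ℝ (fderiv ℝ U) c v v =
      ∑ j, hherm.eigenvalues j * inner ℝ (hherm.eigenvectorBasis j) v ^ 2 := by
  set b := hherm.eigenvectorBasis with hb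
  have hcol : ∀ j, fderiv ℝ (fderiv ℝ U) c v (b j) = hherm.eigenvalues j * inner ℝ (b j) v := by
    intro j
    rw [second_deriv_eq_inner_hessian, hherm.mulVec_eigenvectorBasis j]
    simp only [PiLp.inner_apply, Finset.mul_sum, ← hb, Pi.smul_apply, smul_eq_mul]
    refine Finset.sum_congr rfl fun i _ => ?_
    simp
    ring
  calc fderiv ℝ (fderiv ℝ U) c v v
      = fderiv ℝ (fderiv ℝ U) c v (∑ j, inner ℝ (b j) v • b j) := by rw [b.sum_repr' v]
    _ = ∑ j, hherm.eigenvalues j * inner ℝ (b j) v ^ 2 := by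
      simp only [map_sum, map_smul, hcol, smul_eq_mul]
      exact Finset.sum_congr rfl fun j _ => by ring

/-- Let `U : ℝ^d → ℝ` be smooth and let `c` be a critical point of `U` whose
Hessian is invertible with at least two negative eigenvalues (with multiplicity).  Then for all
sufficiently small `r > 0`, the set `A(c, r) = (B(c, r) ∖ {c}) ∩ {U < U c}` is
path-connected. -/
theorem sublevel_near_higher_index_point_path_connected
    (d : ℕ) (hd : 1 ≤ d) (U : EuclideanSpace ℝ (Fin d) → ℝ)
    (hU : ContDiff ℝ (⊤ : ℕ∞) U) (c : EuclideanSpace ℝ (Fin d))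
    (hcrit : gradient U c = 0)
    (hinv : IsUnit (hessianMatrix U c))
    (hherm : (hessianMatrix U c).IsHermitian)
    (hindex : 2 ≤ (Finset.univ.filter fun i => hherm.eigenvalues i < 0).card) :
    ∃ r₀ > (0 : ℝ), ∀ r : ℝ, 0 < r → r ≤ r₀ →
      IsPathConnected ((Metric.ball c r \ {c}) ∩ {y | U y < U c}) := by
  have hne : ∀ i, hherm.eigenvalues i ≠ 0 := by
    have hdet := (Matrix.isUnit_iff_isUnit_det _).1 hinv
    rw [hherm.det_eq_prod_eigenvalues, isUnit_iff_ne_zero, Finset.prod_ne_zero_iff] at hdet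
    intro i
    simpa using hdet i (Finset.mem_univ i)
  have : Nonempty (Fin d) := ⟨⟨0, hd⟩⟩
  obtain ⟨i₀, hi₀⟩ := Finite.exists_min fun i => |hherm.eigenvalues i|
  set m := |hherm.eigenvalues i₀| with hm
  have hmpos : 0 < m := abs_pos.2 (hne i₀)
  set b := hherm.eigenvectorBasis with hb
  let neg := {i : Fin d // hherm.eigenvalues i < 0}
  set N : Submodule ℝ (EuclideanSpace ℝ (Fin d)) :=
    Submodule.span ℝ (Set.range fun i : neg => b i) with hN
  have hlin : LinearIndependent ℝ fun i : neg => b i :=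
    b.orthonormal.linearIndependent.comp _ Subtype.val_injective
  have hrank : 1 < Module.rank ℝ N := by
    have h1 : Module.finrank ℝ N = Fintype.card neg := finrank_span_eq_card hlin
    have h2 : 1 < Module.finrank ℝ N := by
      rw [h1, Fintype.card_subtype]
      exact hindex
    rw [← Module.finrank_eq_rank]
    exact_mod_cast h2
  have hNorth : ∀ v ∈ N, ∀ i, ¬ hherm.eigenvalues i < 0 → inner ℝ (b i) v = 0 := by
    intro v hv i hi
    induction hv using Submodule.span_induction with
    | mem x hx =>
      obtain ⟨j, rfl⟩ := hx
      exact b.orthonormal.2 fun h => hi (h ▸ j.2)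
    | zero => simp
    | add x y _ _ hx hy => rw [inner_add_right, hx, hy, add_zero]
    | smul a x _ hx => rw [inner_smul_right, hx, mul_zero]
  have hPorth : ∀ v ∈ Nᗮ, ∀ i, hherm.eigenvalues i < 0 → inner ℝ (b i) v = 0 := fun v hv i hi =>
    (Submodule.mem_orthogonal N v).1 hv _ (Submodule.subset_span ⟨⟨i, hi⟩, rfl⟩)
  have hfd : fderiv ℝ U c = 0 := by
    simpa [gradient] using hcrit
  refine isPathConnected_sublevel_of_definite_splitting
    (by exact_mod_cast contDiff_infty.1 hU 2) c hfd N hrank hmpos ?_ ?_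
  · intro v hv
    rw [second_deriv_eq_sum_eigenvalues U c hherm v, ← b.sum_sq_inner_right v, Finset.mul_sum,
      ← Finset.sum_neg_distrib]
    refine Finset.sum_le_sum fun i _ => ?_
    by_cases hi : hherm.eigenvalues i < 0
    · have h := hi₀ i
      simp only [abs_of_neg hi] at h
      nlinarith [sq_nonneg (inner ℝ (b i) v)]
    · simp [← hb, hNorth v hv i hi]
  · intro v hv
    rw [second_deriv_eq_sum_eigenvalues U c hherm v, ← b.sum_sq_inner_right v, Finset.mul_sum]
    refine Finset.sum_le_sum fun i _ => ?_
    by_cases hi : hherm.eigenvalues i < 0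
    · simp [← hb, hPorth v hv i hi]
    · have h := hi₀ i
      simp only [abs_of_nonneg (not_lt.1 hi)] at h
      exact mul_le_mul_of_nonneg_right h (sq_nonneg _)
end

section
/- Let U : ℝ^d → ℝ be three times continuously differentiable with all critical points nondegenerate. Fix H₀ ∈ ℝ and let 𝓗 be a connected component of the open set {x ∈ ℝ^d : U(x) < H₀}. Then the closure cl(𝓗) is path connected. -/
open Set Metric

/-- The point `y` can be joined to `x` by a broken line `y → y' → x` along which `U < U x`
everywhere except at the endpoint `x`. -/
def TwoSegmentAccess {E : Type*} [AddCommGroup E] [Module ℝ E] (U : E → ℝ) (x y : E) : Prop :=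
  ∃ y', (∀ t ∈ Icc (0 : ℝ) 1, U (y + t • (y' - y)) < U x) ∧
    ∀ s ∈ Ioc (0 : ℝ) 1, U (x + s • (y' - x)) < U x

/-! ### Two-segment access near a critical or a regular point -/

section Local

variable {E : Type*} [NormedAddCommGroup E] [InnerProductSpace ℝ E] [CompleteSpace E]
  {U : E → ℝ} {G : E → E}

lemma hasDerivAt_along_line (hG : ∀ z, HasGradientAt U (G z) z) (a v : E) (t : ℝ) :
    HasDerivAt (fun t : ℝ => U (a + t • v)) (inner ℝ (G (a + t • v)) v) t := by
  have h1 : HasDerivAt (fun t : ℝ => a + t • v) v t := by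
    simpa using ((hasDerivAt_id t).smul_const v).const_add a
  have h2 := (hG (a + t • v)).hasFDerivAt.comp_hasDerivAt t h1
  exact h2.congr_deriv (by simp)

lemma le_sub_of_inner_gradient_le (hG : ∀ z, HasGradientAt U (G z) z) (a v : E) (c : ℝ)
    (h : ∀ t ∈ Icc (0 : ℝ) 1, inner ℝ (G (a + t • v)) v ≤ -c) {t : ℝ} (ht : t ∈ Icc (0 : ℝ) 1) :
    U (a + t • v) ≤ U a - c * t := by
  have hd := hasDerivAt_along_line hG a v
  have := (convex_Icc (0 : ℝ) 1).image_sub_le_mul_sub_of_deriv_le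
    (f := fun t : ℝ => U (a + t • v)) (C := -c)
    (fun s _ => (hd s).continuousAt.continuousWithinAt)
    (fun s _ => (hd s).differentiableAt.differentiableWithinAt)
    (fun s hs => by rw [(hd s).deriv]; exact h s (interior_subset hs))
    0 (by simp) t ht ht.1
  simp only [zero_smul, add_zero, sub_zero] at this
  linarith

lemma twoSegmentAccess_of_gradient_ne_zero (hG : ∀ z, HasGradientAt U (G z) z) {x : E}
    (hc : ContinuousAt G x) (hx : G x ≠ 0) :
    ∃ δ > 0, ∀ y ∈ ball x δ, U y < U x → TwoSegmentAccess U x y := by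
  have hγ : 0 < ‖G x‖ := norm_pos_iff.2 hx
  set γ := ‖G x‖ with hγd
  obtain ⟨r, hr, hball⟩ := Metric.continuousAt_iff.1 hc (γ / 4) (by positivity)
  have hclose : ∀ z, ‖z‖ < r → ‖G (x + z) - G x‖ ≤ γ / 4 := fun z hz => by
    have := hball (x := x + z) (by simpa [dist_eq_norm] using hz)
    rw [dist_eq_norm] at this
    exact this.le
  -- For `t₀ γ = r / 2` and `|y - x| < r / 8`, both segments stay in the ball of radius `r`.
  set t₀ := r / (2 * γ) with ht₀
  have ht₀pos : 0 < t₀ := by positivity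
  have htγ : t₀ * γ = r / 2 := by rw [ht₀]; field_simp
  have hself : inner ℝ (G x) (G x) = γ * γ := by rw [real_inner_self_eq_norm_mul_norm]
  refine ⟨r / 8, by positivity, fun y hy hyU => ⟨y - t₀ • G x, ?_, ?_⟩⟩
  · intro t ht
    have hw : ‖y - x‖ < r / 8 := by simpa [dist_eq_norm] using hy
    have key := le_sub_of_inner_gradient_le hG y (y - t₀ • G x - y) 0 ?_ ht
    · simpa using key.trans_lt (by simpa using hyU)
    intro t ht
    have e1 : y - t₀ • G x - y = -(t₀ • G x) := by abel
    have e2 : y + t • (y - t₀ • G x - y) = x + ((y - x) - t • t₀ • G x) := by rw [e1]; module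
    have hn : ‖(y - x) - t • t₀ • G x‖ < r := by
      have h1 := norm_sub_le (y - x) (t • t₀ • G x)
      rw [norm_smul, norm_smul, Real.norm_of_nonneg ht.1, Real.norm_of_nonneg ht₀pos.le,
        ← hγd, htγ] at h1
      nlinarith [ht.2]
    have h2 := hclose _ hn
    rw [e2, e1]
    set z := x + ((y - x) - t • t₀ • G x)
    have h3 : inner ℝ (G z) (G x) = γ * γ + inner ℝ (G z - G x) (G x) := by
      rw [inner_sub_left, hself]; ring
    have h4 := abs_le.1 (abs_real_inner_le_norm (G z - G x) (G x))
    rw [inner_neg_right, inner_smul_right, h3]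
    have h5 : ‖G z - G x‖ * ‖G x‖ ≤ γ / 4 * γ := by gcongr
    have : 0 ≤ γ * γ + inner ℝ (G z - G x) (G x) := by nlinarith [h4.1]
    have := mul_nonneg ht₀pos.le this
    linarith
  · have hw : ‖y - x‖ < r / 8 := by simpa [dist_eq_norm] using hy
    set w := y - x with hwd
    have e1 : y - t₀ • G x - x = w - t₀ • G x := by rw [hwd]; abel
    have hv : ‖w - t₀ • G x‖ ≤ 5 * r / 8 := by
      have h1 := norm_sub_le w (t₀ • G x)
      rw [norm_smul, Real.norm_of_nonneg ht₀pos.le, ← hγd, htγ] at h1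
      linarith
    intro s hs
    rw [e1]
    have key := le_sub_of_inner_gradient_le hG x (w - t₀ • G x) (γ * r / 8) ?_
      ⟨hs.1.le, hs.2⟩
    · have : 0 < γ * r / 8 * s := mul_pos (by positivity) hs.1
      linarith
    intro t ht
    have hn : ‖t • (w - t₀ • G x)‖ < r := by
      rw [norm_smul, Real.norm_of_nonneg ht.1]
      nlinarith [ht.2, ht.1, norm_nonneg (w - t₀ • G x)]
    have h2 := hclose _ hn
    set z := x + t • (w - t₀ • G x)
    have h3 : inner ℝ (G z) (w - t₀ • G x)
        = inner ℝ (G x) w - t₀ * γ * γ + inner ℝ (G z - G x) (w - t₀ • G x) := by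
      have : inner ℝ (G x) (w - t₀ • G x) = inner ℝ (G x) w - t₀ * γ * γ := by
        rw [inner_sub_right, inner_smul_right, hself]; ring
      rw [inner_sub_left, this]; ring
    have h4 := real_inner_le_norm (G z - G x) (w - t₀ • G x)
    have h5 : ‖G z - G x‖ * ‖w - t₀ • G x‖ ≤ γ / 4 * (5 * r / 8) := by gcongr
    have h6 := real_inner_le_norm (G x) w
    have h7 : ‖G x‖ * ‖w‖ ≤ γ * (r / 8) := by gcongr
    rw [h3, htγ]
    nlinarith [mul_pos hγ hr]

/-- Second-order Taylor estimate at a critical point: if `∇U` is within `ε |z|` of the linear map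
`B z` near `x`, then `U (x + z) - U x` is within `ε |z|²` of `⟨B z, z⟩ / 2`. -/
lemma taylor_two_of_gradient (hG : ∀ z, HasGradientAt U (G z) z) {x : E} (B : E →L[ℝ] E)
    {ε r : ℝ} (hε : 0 ≤ ε) (hB : ∀ z, ‖z‖ < r → ‖G (x + z) - B z‖ ≤ ε * ‖z‖) {z : E}
    (hz : ‖z‖ < r) :
    |U (x + z) - U x - inner ℝ (B z) z / 2| ≤ ε * ‖z‖ ^ 2 := by
  have hd : ∀ s ∈ Icc (0 : ℝ) 1, HasDerivWithinAt
      (fun s : ℝ => U (x + s • z) - s ^ 2 * (inner ℝ (B z) z / 2))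
      (inner ℝ (G (x + s • z) - B (s • z)) z) (Icc 0 1) s := by
    intro s _
    have h := (hasDerivAt_along_line hG x z s).sub
      (((hasDerivAt_id s).pow 2).mul_const (inner ℝ (B z) z / 2))
    refine (h.congr_deriv ?_).hasDerivWithinAt
    rw [inner_sub_left, map_smul, real_inner_smul_left]
    simp
    ring
  have hb : ∀ s ∈ Icc (0 : ℝ) 1, ‖inner ℝ (G (x + s • z) - B (s • z)) z‖ ≤ ε * ‖z‖ ^ 2 := by
    intro s hs
    have hsz : ‖s • z‖ ≤ ‖z‖ := by
      rw [norm_smul, Real.norm_of_nonneg hs.1]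
      nlinarith [hs.2, norm_nonneg z]
    calc _ ≤ ‖G (x + s • z) - B (s • z)‖ * ‖z‖ := norm_inner_le_norm _ _
      _ ≤ (ε * ‖z‖) * ‖z‖ := by
        gcongr
        exact (hB _ (hsz.trans_lt hz)).trans (by gcongr)
      _ = _ := by ring
  have := Convex.norm_image_sub_le_of_norm_hasDerivWithin_le hd hb (convex_Icc 0 1)
    (x := 0) (y := 1) (by simp) (by simp)
  simp only [one_smul, zero_smul, add_zero, Real.norm_eq_abs] at this
  calc _ = _ := by congr 1; ring
    _ ≤ _ := this
    _ = _ := by simp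

lemma twoSegmentAccess_of_gradient_eq_zero (hG : ∀ z, HasGradientAt U (G z) z) {x : E}
    (hx : G x = 0) {B : E →L[ℝ] E} (hB : HasFDerivAt G B x) {k : ℝ} (hk : 0 < k)
    (hBk : ∀ z, k * ‖z‖ ≤ ‖B z‖) :
    ∃ δ > 0, ∀ y ∈ ball x δ, U y < U x → TwoSegmentAccess U x y := by
  obtain ⟨N, hN, hBN⟩ : ∃ N > 0, ∀ z, ‖B z‖ ≤ N * ‖z‖ :=
    ⟨‖B‖ + 1, by positivity, fun z => (B.le_opNorm z).trans (by gcongr; linarith)⟩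
  set τ := 1 / (2 * N) with hτd
  have hτ : 0 < τ := by positivity
  have hτN : τ * N = 1 / 2 := by rw [hτd]; field_simp
  -- `k / 8` makes the first segment descend; `τ k² / 64` absorbs two Taylor remainders.
  obtain ⟨ε, hε, hε1, hε2⟩ : ∃ ε > 0, ε ≤ k / 8 ∧ ε ≤ τ * k ^ 2 / 64 :=
    ⟨min (k / 8) (τ * k ^ 2 / 64), by positivity, min_le_left _ _, min_le_right _ _⟩
  obtain ⟨r, hr, hGr⟩ := Metric.eventually_nhds_iff.1 (hB.isLittleO.def hε)
  have hclose : ∀ z, ‖z‖ < r → ‖G (x + z) - B z‖ ≤ ε * ‖z‖ := fun z hz => by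
    simpa [hx] using hGr (y := x + z) (by simpa [dist_eq_norm] using hz)
  refine ⟨r / 2, by positivity, fun y hy hyU => ⟨y - τ • B (y - x), ?_⟩⟩
  have hw : ‖y - x‖ < r / 2 := by simpa [dist_eq_norm] using hy
  have hwy : y = x + (y - x) := by abel
  set w := y - x with hwd
  have e1 : y - τ • B w - y = -(τ • B w) := by abel
  have hτB : ‖τ • B w‖ ≤ ‖w‖ / 2 := by
    rw [norm_smul, Real.norm_of_nonneg hτ.le]
    calc τ * ‖B w‖ ≤ τ * (N * ‖w‖) := by gcongr; exact hBN w
      _ = ‖w‖ / 2 := by rw [← mul_assoc, hτN]; ring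
  have hzle : ∀ t ∈ Icc (0 : ℝ) 1, ‖w - t • τ • B w‖ ≤ 2 * ‖w‖ := by
    intro t ht
    have h1 := norm_sub_le w (t • τ • B w)
    have h2 : ‖t • τ • B w‖ ≤ ‖τ • B w‖ := by
      rw [norm_smul t, Real.norm_of_nonneg ht.1]
      nlinarith [ht.2, norm_nonneg (τ • B w)]
    linarith [norm_nonneg w]
  have hdesc : ∀ t ∈ Icc (0 : ℝ) 1,
      U (y + t • (y - τ • B w - y)) ≤ U y - τ * ‖B w‖ ^ 2 / 4 * t := by
    intro t ht
    refine le_sub_of_inner_gradient_le hG y _ _ ?_ ht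
    intro t ht
    have e2 : y + t • (y - τ • B w - y) = x + (w - t • τ • B w) := by
      rw [e1, hwd]; module
    rw [e2, e1]
    have hz := hzle t ht
    have h2 := hclose (w - t • τ • B w) (by linarith)
    set z := w - t • τ • B w with hzd
    have h3 : inner ℝ (G (x + z)) (B w)
        = ‖B w‖ ^ 2 - t * τ * inner ℝ (B (B w)) (B w) + inner ℝ (G (x + z) - B z) (B w) := by
      have : B z = B w - t • τ • B (B w) := by simp [hzd]
      rw [inner_sub_left, this, inner_sub_left, real_inner_self_eq_norm_sq,
        real_inner_smul_left, real_inner_smul_left]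
      ring
    have h4 := (abs_le.1 (abs_real_inner_le_norm (G (x + z) - B z) (B w))).1
    have h5 : ‖G (x + z) - B z‖ * ‖B w‖ ≤ ‖B w‖ ^ 2 / 4 := by
      calc _ ≤ (ε * (2 * ‖w‖)) * ‖B w‖ := by gcongr; exact h2.trans (by gcongr)
        _ ≤ (k / 8 * (2 * ‖w‖)) * ‖B w‖ := by gcongr
        _ = (k * ‖w‖) * ‖B w‖ / 4 := by ring
        _ ≤ ‖B w‖ * ‖B w‖ / 4 := by gcongr; exact hBk w
        _ = _ := by ring
    have h6 : t * τ * inner ℝ (B (B w)) (B w) ≤ ‖B w‖ ^ 2 / 2 := by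
      have h7 : inner ℝ (B (B w)) (B w) ≤ N * ‖B w‖ * ‖B w‖ :=
        (real_inner_le_norm _ _).trans (by gcongr; exact hBN _)
      have ht0 := ht.1
      calc _ ≤ t * τ * (N * ‖B w‖ * ‖B w‖) := by gcongr
        _ = t * ((τ * N) * ‖B w‖ ^ 2) := by ring
        _ ≤ 1 * ((τ * N) * ‖B w‖ ^ 2) := by gcongr; exact ht.2
        _ = _ := by rw [hτN]; ring
    have h8 : ‖B w‖ ^ 2 / 4 ≤ inner ℝ (G (x + z)) (B w) := by rw [h3]; linarith
    rw [inner_neg_right, inner_smul_right]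
    have := mul_le_mul_of_nonneg_left h8 hτ.le
    linarith
  refine ⟨fun t ht => ?_, fun s hs => ?_⟩
  · have : 0 ≤ τ * ‖B w‖ ^ 2 / 4 * t := mul_nonneg (by positivity) ht.1
    linarith [hdesc t ht]
  · have e3 : y - τ • B w - x = w - τ • B w := by rw [hwd]; abel
    have hend := hdesc 1 (by simp)
    have e4 : y + (1 : ℝ) • (y - τ • B w - y) = x + (w - τ • B w) := by
      rw [e1, hwd]; module
    have hle := hzle 1 (by simp)
    rw [one_smul] at hle
    rw [e4] at hend
    rw [e3]
    set w' := w - τ • B w with hw'd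
    have hw'0 : 0 < ‖w'‖ := by
      rw [norm_pos_iff]
      intro h0
      rw [h0, add_zero] at hend
      have : 0 ≤ τ * ‖B w‖ ^ 2 / 4 * 1 := by positivity
      linarith
    have hBw' : k ^ 2 * ‖w'‖ ^ 2 ≤ 4 * ‖B w‖ ^ 2 := by
      have h1 : k * ‖w'‖ ≤ 2 * ‖B w‖ := by
        calc k * ‖w'‖ ≤ k * (2 * ‖w‖) := by gcongr
          _ = 2 * (k * ‖w‖) := by ring
          _ ≤ _ := by gcongr; exact hBk w
      have h2 := pow_le_pow_left₀ (by positivity) h1 2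
      nlinarith
    have hr' : ‖w'‖ < r := by linarith
    have hdrop : τ * k ^ 2 / 16 * ‖w'‖ ^ 2 ≤ τ * ‖B w‖ ^ 2 / 4 := by
      have := mul_le_mul_of_nonneg_left hBw' hτ.le
      linarith
    have hT1 := (abs_le.1 (taylor_two_of_gradient hG B hε.le hclose hr')).1
    have hs2 : ‖s • w'‖ = s * ‖w'‖ := by rw [norm_smul, Real.norm_of_nonneg hs.1.le]
    have hTs := (abs_le.1 (taylor_two_of_gradient hG B hε.le hclose (z := s • w')
      (by rw [hs2]; nlinarith [hs.2, hs.1]))).2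
    rw [hs2, map_smul, real_inner_smul_left, real_inner_smul_right] at hTs
    have hεw : ε * ‖w'‖ ^ 2 ≤ τ * k ^ 2 / 64 * ‖w'‖ ^ 2 := by gcongr
    have hpos : 0 < τ * k ^ 2 / 64 * ‖w'‖ ^ 2 := by positivity
    have hneg : inner ℝ (B w') w' / 2 + ε * ‖w'‖ ^ 2 < 0 := by linarith
    have := mul_neg_of_pos_of_neg (pow_pos hs.1 2) hneg
    nlinarith

end Local

/-! ### From two-segment access to paths in the closure -/

/-- If the point `x` of the level set `{U = H₀}` lies in the closure of a component of `{U < H₀}`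
and all nearby points of `{U < H₀}` have two-segment access to `x`, then `x` is joined to the
component within its closure. -/
lemma exists_joinedIn_closure_component {E : Type*} [NormedAddCommGroup E] [NormedSpace ℝ E]
    {U : E → ℝ} {x x₀ : E} {H : ℝ} (hxH : U x = H)
    (hx : x ∈ closure (connectedComponentIn {x | U x < H} x₀))
    (hacc : ∃ δ > 0, ∀ y ∈ ball x δ, U y < U x → TwoSegmentAccess U x y) :
    ∃ y ∈ connectedComponentIn {x | U x < H} x₀,
      JoinedIn (closure (connectedComponentIn {x | U x < H} x₀)) y x := by
  obtain ⟨δ, hδ, hacc⟩ := hacc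
  obtain ⟨y, hy, hyx⟩ := Metric.mem_closure_iff.1 hx δ hδ
  have hyU : y ∈ {x | U x < H} := connectedComponentIn_subset _ _ hy
  have hyU : U y < H := hyU
  obtain ⟨y', h1, h2⟩ := hacc y (by rwa [mem_ball, dist_comm]) (hxH ▸ hyU)
  rw [hxH] at h1 h2
  set C := connectedComponentIn {x | U x < H} x₀ with hC
  have hstep : ∀ T : Set E, IsPreconnected T → ∀ p ∈ T, p ∈ C → T ⊆ {x | U x < H} → T ⊆ C := by
    intro T hT p hpT hpC hTS
    rw [hC, connectedComponentIn_eq hpC]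
    exact hT.subset_connectedComponentIn hpT hTS
  have hseg1 : segment ℝ y y' ⊆ C := by
    refine hstep _ (convex_segment y y').isPreconnected y (left_mem_segment _ _ _) hy ?_
    rw [segment_eq_image']
    rintro _ ⟨t, ht, rfl⟩
    exact h1 t ht
  have hy'C : y' ∈ C := hseg1 (right_mem_segment _ _ _)
  have hseg2 : (fun s : ℝ => x + s • (y' - x)) '' Ioc 0 1 ⊆ C := by
    refine hstep _ ((isPreconnected_Ioc).image _ (by fun_prop)) y' ⟨1, by simp, by simp⟩ hy'C ?_
    rintro _ ⟨t, ht, rfl⟩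
    exact h2 t ht
  refine ⟨y, hy, (JoinedIn.of_segment_subset (hseg1.trans subset_closure)).trans
    (JoinedIn.of_segment_subset (y := x) ?_)⟩
  rw [segment_symm, segment_eq_image']
  rintro _ ⟨t, ht, rfl⟩
  rcases ht.1.eq_or_lt with rfl | h0
  · simpa using hx
  · exact subset_closure (hseg2 ⟨t, ⟨h0, ht.2⟩, rfl⟩)

/-! ### Nondegeneracy of the Hessian -/

/-- Invertibility of the Hessian matrix gives a lower bound for the derivative of `fderiv ℝ U`. -/
lemma exists_le_norm_hessian {d : ℕ} {U : EuclideanSpace ℝ (Fin d) → ℝ}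
    {x : EuclideanSpace ℝ (Fin d)} (h : IsUnit (hessianMatrix U x)) :
    ∃ k > 0, ∀ z, k * ‖z‖ ≤ ‖fderiv ℝ (fderiv ℝ U) x z‖ := by
  set L := fderiv ℝ (fderiv ℝ U) x with hL
  have hker : L.toLinearMap.ker = ⊥ := by
    refine LinearMap.ker_eq_bot'.2 fun z hz => ?_
    have hz' : L z = 0 := hz
    have hv : Matrix.vecMul z.ofLp (hessianMatrix U x) = 0 := by
      funext j
      have hzsum : z = ∑ i, z.ofLp i • EuclideanSpace.single i (1 : ℝ) := by
        simpa using ((EuclideanSpace.basisFun (Fin d) ℝ).sum_repr z).symm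
      have h0 : L z (EuclideanSpace.single j 1) = 0 := by rw [hz']; rfl
      rw [hzsum] at h0
      simpa [Matrix.vecMul, dotProduct, hessianMatrix, iteratedFDeriv_two_apply, ← hL] using h0
    have := Matrix.vecMul_injective_of_isUnit h (a₁ := z.ofLp) (a₂ := 0) (by simpa using hv)
    ext i
    exact congrFun this i
  obtain ⟨K, hK, hanti⟩ := L.toLinearMap.exists_antilipschitzWith hker
  have hK' : (0 : ℝ) < K := hK
  refine ⟨(K : ℝ)⁻¹, by positivity, fun z => ?_⟩
  have := hanti.le_mul_dist z 0
  simp only [dist_zero_right, map_zero] at this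
  rw [inv_mul_le_iff₀ hK']
  exact this

/-! ### Path connectedness of the closure -/

/-- Let `U : ℝ^d → ℝ` be `C³` with all critical points nondegenerate, and let
`𝓗` be a connected component of the open set `{x : U x < H₀}`.  Then the closure of `𝓗` is
path connected. -/
theorem closure_of_open_sublevel_component_path_connected
    (d : ℕ) (hd : 1 ≤ d) (U : EuclideanSpace ℝ (Fin d) → ℝ)
    (hU : ContDiff ℝ 3 U)
    (hnd : ∀ x, gradient U x = 0 → IsUnit (hessianMatrix U x))
    (H₀ : ℝ) (𝓗 : Set (EuclideanSpace ℝ (Fin d)))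
    (h𝓗 : ∃ x₀ ∈ {x | U x < H₀}, 𝓗 = connectedComponentIn {x | U x < H₀} x₀) :
    IsPathConnected (closure 𝓗) := by
  obtain ⟨x₀, hx₀, rfl⟩ := h𝓗
  have hopen : IsOpen {x | U x < H₀} := isOpen_lt hU.continuous continuous_const
  set C := connectedComponentIn {x | U x < H₀} x₀ with hC
  have hxC : x₀ ∈ C := mem_connectedComponentIn hx₀
  have hCpath : IsPathConnected C :=
    (hopen.connectedComponentIn.isConnected_iff_isPathConnected).1
      ⟨⟨x₀, hxC⟩, isPreconnected_connectedComponentIn⟩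
  have hG : ∀ z, HasGradientAt U (gradient U z) z := fun z =>
    (hU.differentiable (by norm_num) z).hasGradientAt
  have hdd : Differentiable ℝ (fderiv ℝ U) :=
    (hU.fderiv_right (m := 2) (by norm_num)).differentiable (by norm_num)
  -- `D` is the Riesz isometry, so `∇U = D ∘ fderiv U` and `∇²U = D ∘ fderiv (fderiv U)`.
  let D : (EuclideanSpace ℝ (Fin d) →L[ℝ] ℝ) ≃ₗᵢ[ℝ] EuclideanSpace ℝ (Fin d) :=
    (InnerProductSpace.toDual ℝ (EuclideanSpace ℝ (Fin d))).symm
  have hGd : ∀ x, HasFDerivAt (gradient U)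
      (D.toContinuousLinearEquiv.toContinuousLinearMap.comp (fderiv ℝ (fderiv ℝ U) x)) x := fun x =>
    D.toContinuousLinearEquiv.toContinuousLinearMap.hasFDerivAt.comp x (hdd x).hasFDerivAt
  have hjoin : ∀ x ∈ closure C, ∃ y ∈ C, JoinedIn (closure C) y x := by
    intro x hx
    have hle : U x ≤ H₀ :=
      closure_minimal (fun z hz => le_of_lt (show U z < H₀ from connectedComponentIn_subset {x | U x < H₀} x₀ hz))
        (isClosed_le hU.continuous continuous_const) hx
    rcases hle.lt_or_eq with hlt | heq
    · have hins : insert x C ⊆ C :=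
        ((isPreconnected_connectedComponentIn).subset_closure (subset_insert _ _)
          (insert_subset hx subset_closure)).subset_connectedComponentIn
          (mem_insert_of_mem _ hxC) (insert_subset hlt (connectedComponentIn_subset _ _))
      exact ⟨x, hins (mem_insert _ _), JoinedIn.refl hx⟩
    · refine exists_joinedIn_closure_component heq hx ?_
      by_cases hg : gradient U x = 0
      · obtain ⟨k, hk, hkL⟩ := exists_le_norm_hessian (hnd x hg)
        exact twoSegmentAccess_of_gradient_eq_zero hG hg (hGd x) hk
          (fun z => (hkL z).trans_eq (D.norm_map _).symm)
      · exact twoSegmentAccess_of_gradient_ne_zero hG (hGd x).continuousAt hg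
  refine ⟨x₀, subset_closure hxC, fun {x} hx => ?_⟩
  obtain ⟨y, hy, hyx⟩ := hjoin x hx
  exact ((hCpath.joinedIn x₀ hxC y hy).mono subset_closure).trans hyx
end
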